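/- Spectral transference (Theorem 2.2(i), finite-group form): Every eigenvalue of the Lindblad generator 𝓛, viewed as a ℂ-linear map on the d×d complex matrices, is an eigenvalue of the classical generator L, viewed as a ℂ-linear map on ℂ^G. Consequently the smallest nonzero eigenvalue (spectral gap) of 𝓛 is at least the smallest nonzero eigenvalue of L when both spectra are real. -/

import Mathlib

/-!
The map `π x g = (u g)ᴴ * x * u g` sends matrices to matrix-valued functions on `G`. The phases of
the projective representation cancel under conjugation, so `π x (h * g) = (u g)ᴴ ((u h)ᴴ x u h) u g`,
and `π` intertwines `𝓛` with `L` applied entrywise. If `x` is an eigenvector of `𝓛`, every entry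
function `g ↦ (π x g) i j` therefore satisfies the eigenvalue equation for `L`, and one of them is
nonzero because conjugation by the unitary `u 1` is injective. The comparison of gaps is the
inclusion of spectra together with finiteness of the spectrum of `L`.
-/

open Matrix

/-- Conjugation by `u (h * g)` is conjugation by `u h` followed by that by `u g`: the phase enters
together with its complex conjugate. -/
lemma conj_mul_eq_conj_conj {G : Type*} [Group G] {d : ℕ} (u : G → Matrix (Fin d) (Fin d) ℂ)
    (hu_proj : ∀ g h, ∃ c : ℂ, ‖c‖ = 1 ∧ u g * u h = c • u (g * h))
    (h g : G) (x : Matrix (Fin d) (Fin d) ℂ) :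
    (u (h * g))ᴴ * x * u (h * g) = (u g)ᴴ * ((u h)ᴴ * x * u h) * u g := by
  obtain ⟨a, ha, hm⟩ := hu_proj h g
  have h1 : (u g)ᴴ * ((u h)ᴴ * x * u h) * u g = (u h * u g)ᴴ * x * (u h * u g) := by
    simp only [conjTranspose_mul, Matrix.mul_assoc]
  have h2 : a * star a = 1 := by
    rw [Complex.star_def, Complex.mul_conj, Complex.normSq_eq_norm_sq, ha]
    simp
  rw [h1, hm, conjTranspose_smul, Matrix.smul_mul, Matrix.smul_mul, Matrix.mul_smul, smul_smul,
    mul_comm, h2, one_smul]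


/-- **Spectral transference.** Every eigenvalue of the transferred Lindblad generator `𝓛`
(as a `ℂ`-linear endomorphism of the `d×d` matrices) is an eigenvalue of the classical
generator `L` (as a `ℂ`-linear endomorphism of `ℂ^G`).  Consequently, when both spectra are
real, the smallest nonzero eigenvalue (spectral gap) of `𝓛` is at least the smallest
nonzero eigenvalue of `L`. -/
theorem spectral_transference
    {G : Type*} [Group G] [Fintype G]
    {d : ℕ} (u : G → Matrix (Fin d) (Fin d) ℂ)
    (hu_unitary : ∀ g, u g ∈ Matrix.unitaryGroup (Fin d) ℂ)
    (hu_proj : ∀ g h, ∃ c : ℂ, ‖c‖ = 1 ∧ u g * u h = c • u (g * h))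
    (c : G → ℝ) (hc : ∀ h, 0 ≤ c h)
    (𝓛 : Module.End ℂ (Matrix (Fin d) (Fin d) ℂ))
    (h𝓛 : ∀ x, 𝓛 x = ∑ h : G, (c h : ℂ) • (x - (u h)ᴴ * x * u h))
    (L : Module.End ℂ (G → ℂ))
    (hL : ∀ (f : G → ℂ) (g : G), L f g = ∑ h : G, (c h : ℂ) * (f g - f (h * g))) :
    (∀ lam : ℂ, 𝓛.HasEigenvalue lam → L.HasEigenvalue lam) ∧
    ((∀ lam : ℂ, 𝓛.HasEigenvalue lam → ∃ r : ℝ, lam = (r : ℂ)) →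
      (∀ lam : ℂ, L.HasEigenvalue lam → ∃ r : ℝ, lam = (r : ℂ)) →
      (∃ r : ℝ, r ≠ 0 ∧ 𝓛.HasEigenvalue (r : ℂ)) →
      sInf {r : ℝ | r ≠ 0 ∧ L.HasEigenvalue (r : ℂ)}
        ≤ sInf {r : ℝ | r ≠ 0 ∧ 𝓛.HasEigenvalue (r : ℂ)}) := by
  have key : ∀ lam : ℂ, 𝓛.HasEigenvalue lam → L.HasEigenvalue lam := by
    intro lam hlam
    obtain ⟨x, hx⟩ := hlam.exists_hasEigenvector
    have hx0 : x ≠ 0 := hx.2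
    have hxe : 𝓛 x = lam • x := hx.apply_eq_smul
    have hne : (u 1)ᴴ * x * u 1 ≠ 0 := by
      intro h0
      apply hx0
      have hU : u 1 * (u 1)ᴴ = 1 := Matrix.mem_unitaryGroup_iff.mp (hu_unitary 1)
      calc x = (u 1 * (u 1)ᴴ) * x * (u 1 * (u 1)ᴴ) := by rw [hU]; simp
        _ = u 1 * ((u 1)ᴴ * x * u 1) * (u 1)ᴴ := by simp only [Matrix.mul_assoc]
        _ = 0 := by rw [h0]; simp
    obtain ⟨i, j, hij⟩ : ∃ i j, ((u 1)ᴴ * x * u 1) i j ≠ 0 := by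
      by_contra! hcon
      exact hne (Matrix.ext hcon)
    have hvec : L.HasEigenvector lam (fun g => ((u g)ᴴ * x * u g) i j) := by
      refine Module.End.hasEigenvector_iff.mpr
        ⟨Module.End.mem_eigenspace_iff.mpr ?_, fun h0 => hij (congrFun h0 1)⟩
      funext g
      have hconj : (u g)ᴴ * 𝓛 x * u g
          = ∑ h : G, (c h : ℂ) • ((u g)ᴴ * x * u g - (u (h * g))ᴴ * x * u (h * g)) := by
        rw [h𝓛, Finset.mul_sum, Finset.sum_mul]
        refine Finset.sum_congr rfl fun h _ => ?_
        rw [conj_mul_eq_conj_conj u hu_proj, Matrix.mul_smul, Matrix.smul_mul, Matrix.mul_sub,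
          Matrix.sub_mul]
      have hentry := congrFun (congrFun hconj i) j
      rw [hxe, Matrix.mul_smul, Matrix.smul_mul, Matrix.sum_apply] at hentry
      rw [hL]
      exact hentry.symm
    exact Module.End.hasEigenvalue_of_hasEigenvector hvec
  refine ⟨key, fun _ _ hex => ?_⟩
  have hfin : {r : ℝ | r ≠ 0 ∧ L.HasEigenvalue (r : ℂ)}.Finite :=
    ((Module.End.finite_hasEigenvalue L).preimage Complex.ofReal_injective.injOn).subset
      fun r hr => hr.2
  exact csInf_le_csInf hfin.bddBelow hex fun r hr => ⟨hr.1, key _ hr.2⟩
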